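/- Delaying all non-past events beyond an arbitrary bound: Let M be a valid message pattern, θ a node, T : ℕ, and let Δ > T. Then the shift map φ = φ_{θ,Δ} satisfies: φ(M) is a valid message pattern; θ₁ ⤳ θ₂ with respect to M if and only if φ(θ₁) ⤳ φ(θ₂) with respect to φ(M); φ fixes every node of past(θ) ∪ {θ}; and every node ν ∉ past(θ) ∪ {θ} satisfies time(φ(ν)) > T. -/

import Mathlib

/-- The happens-before relation of a message pattern `M`: the transitive closure of
"same process, strictly earlier time" together with the messages of `M`. -/
def hb {ι : Type*} (M : Set ((ι × ℕ) × (ι × ℕ))) : (ι × ℕ) → (ι × ℕ) → Prop :=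
  Relation.TransGen (fun θ θ' => (θ.1 = θ'.1 ∧ θ.2 < θ'.2) ∨ (θ, θ') ∈ M)

/-- A message pattern is valid if every message is sent strictly before it is delivered. -/
def ValidPattern {ι : Type*} (M : Set ((ι × ℕ) × (ι × ℕ))) : Prop :=
  ∀ m ∈ M, m.1.2 < m.2.2

/-- The past of a node `θ`: all nodes with a message chain to `θ`. -/
def past {ι : Type*} (M : Set ((ι × ℕ) × (ι × ℕ))) (θ : ι × ℕ) : Set (ι × ℕ) :=
  {θ' | hb M θ' θ}

open scoped Classical in
/-- The shift map `φ_{θ,Δ}`: fixes `past(θ) ∪ {θ}`, delays every other node by `Δ`. -/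
noncomputable def shiftMap {ι : Type*} (M : Set ((ι × ℕ) × (ι × ℕ))) (θ : ι × ℕ) (Δ : ℕ)
    (ν : ι × ℕ) : ι × ℕ :=
  if ν ∈ past M θ ∨ ν = θ then ν else (ν.1, ν.2 + Δ)

/-- The message pattern obtained by applying the shift map to both endpoints of
every message of `M`. -/
noncomputable def shiftPattern {ι : Type*} (M : Set ((ι × ℕ) × (ι × ℕ))) (θ : ι × ℕ)
    (Δ : ℕ) : Set ((ι × ℕ) × (ι × ℕ)) :=
  (fun m => (shiftMap M θ Δ m.1, shiftMap M θ Δ m.2)) '' M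

/-!
Nothing outside `past(θ) ∪ {θ}` happens before a node inside it, so whenever `a ⤳ b`, the shift
delays `b` at least as much as `a`. Hence the shift keeps messages valid and is strictly increasing
in time on every process.

Any map that keeps nodes on their process and is strictly increasing in time there preserves and
reflects happens-before. For reflection, note that a chain of `φ(M)` may visit nodes outside the
range of `φ`, but only along runs of local steps. Messages of `φ(M)` join nodes of the range, so in
a chain between two nodes of the range each of these runs also starts and ends in the range; and a
run from `φ(a)` to `φ(b)` pulls back to a single local step from `a` to `b`.
-/

section

variable {ι : Type*} {M : Set ((ι × ℕ) × (ι × ℕ))} {θ a b : ι × ℕ} {Δ : ℕ}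

theorem hb_of_snd_lt (hproc : a.1 = b.1) (htime : a.2 < b.2) : hb M a b :=
  .single (.inl ⟨hproc, htime⟩)

theorem hb_of_mem (hmem : (a, b) ∈ M) : hb M a b :=
  .single (.inr hmem)

theorem hb_of_hb_of_snd_le (hab : hb M a b) {c : ι × ℕ} (hproc : b.1 = c.1)
    (htime : b.2 ≤ c.2) : hb M a c := by
  rcases htime.eq_or_lt with heq | hlt
  · exact Prod.ext hproc heq ▸ hab
  · exact hab.trans (hb_of_snd_lt hproc hlt)

/-- A retiming of the nodes: a map that keeps every node on its process and is strictly increasing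
in time on each process. It abstracts the properties of the shift map from which preservation and
reflection of happens-before follow. -/
structure IsRetiming (f : ι × ℕ → ι × ℕ) : Prop where
  fst_apply (ν : ι × ℕ) : (f ν).1 = ν.1
  strictMono (p : ι) : StrictMono fun t => (f (p, t)).2

namespace IsRetiming

variable {f : ι × ℕ → ι × ℕ}

theorem snd_lt_snd_iff (hf : IsRetiming f) (hproc : a.1 = b.1) :
    (f a).2 < (f b).2 ↔ a.2 < b.2 := by
  obtain ⟨p, s⟩ := a
  obtain ⟨q, t⟩ := b
  obtain rfl : p = q := hproc
  exact (hf.strictMono p).lt_iff_lt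

theorem snd_le_snd_iff (hf : IsRetiming f) (hproc : a.1 = b.1) :
    (f a).2 ≤ (f b).2 ↔ a.2 ≤ b.2 := by
  simpa only [not_lt] using (hf.snd_lt_snd_iff hproc.symm).not

theorem injective (hf : IsRetiming f) : Function.Injective f := by
  intro a b hab
  have hproc : a.1 = b.1 := by rw [← hf.fst_apply a, hab, hf.fst_apply b]
  refine Prod.ext hproc (le_antisymm ?_ ?_)
  · exact (hf.snd_le_snd_iff hproc).1 (by rw [hab])
  · exact (hf.snd_le_snd_iff hproc.symm).1 (by rw [hab])

theorem hb_image (hf : IsRetiming f) (hab : hb M a b) :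
    hb (Prod.map f f '' M) (f a) (f b) := by
  refine Relation.TransGen.lift f ?_ _ _ hab
  rintro x y (⟨hproc, htime⟩ | hmem)
  · exact .inl ⟨by rw [hf.fst_apply, hf.fst_apply, hproc], (hf.snd_lt_snd_iff hproc).2 htime⟩
  · exact .inr ⟨(x, y), hmem, rfl⟩

theorem hb_of_mem_of_map_snd_le (hf : IsRetiming f) {c : ι × ℕ} (hmem : (a, b) ∈ M)
    (hproc : (f b).1 = c.1) (htime : (f b).2 ≤ (f c).2) : hb M a c := by
  rw [hf.fst_apply] at hproc
  exact hb_of_hb_of_snd_le (hb_of_mem hmem) hproc ((hf.snd_le_snd_iff hproc).1 htime)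

-- The last node `z` of the chain need not lie in the range of `f`, which lets the induction pass
-- through arbitrary intermediate nodes.
theorem hb_of_hb_image_of_snd_le (hf : IsRetiming f) {z : ι × ℕ}
    (haz : hb (Prod.map f f '' M) (f a) z) (hproc : z.1 = b.1) (htime : z.2 ≤ (f b).2) :
    hb M a b := by
  induction haz generalizing b with
  | single hstep =>
    rcases hstep with ⟨hproc', htime'⟩ | ⟨⟨c, d⟩, hcd, heq⟩
    · have hab : a.1 = b.1 := by rw [← hf.fst_apply a, hproc', hproc]
      exact hb_of_snd_lt hab ((hf.snd_lt_snd_iff hab).1 (htime'.trans_le htime))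
    · obtain ⟨hca, rfl⟩ := Prod.mk.inj heq
      obtain rfl := hf.injective hca
      exact hf.hb_of_mem_of_map_snd_le hcd hproc htime
  | tail _ hstep ih =>
    rcases hstep with ⟨hproc', htime'⟩ | ⟨⟨c, d⟩, hcd, heq⟩
    · exact ih (hproc'.trans hproc) (htime'.le.trans htime)
    · obtain ⟨rfl, rfl⟩ := Prod.mk.inj heq
      have hac : hb M a c := ih (hf.fst_apply c) le_rfl
      exact hac.trans (hf.hb_of_mem_of_map_snd_le hcd hproc htime)

theorem hb_image_iff (hf : IsRetiming f) :
    hb (Prod.map f f '' M) (f a) (f b) ↔ hb M a b :=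
  ⟨fun h => hf.hb_of_hb_image_of_snd_le h (hf.fst_apply b) le_rfl, hf.hb_image⟩

end IsRetiming

theorem mem_past_of_hb (hab : hb M a b) (hmem : b ∈ past M θ ∪ {θ}) : a ∈ past M θ := by
  rcases hmem with hpast | rfl
  · exact hab.trans hpast
  · exact hab

theorem shiftMap_of_mem {ν : ι × ℕ} (hν : ν ∈ past M θ ∪ {θ}) : shiftMap M θ Δ ν = ν :=
  if_pos hν

theorem shiftMap_of_notMem {ν : ι × ℕ} (hν : ν ∉ past M θ ∪ {θ}) :
    shiftMap M θ Δ ν = (ν.1, ν.2 + Δ) :=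
  if_neg hν

theorem shiftMap_fst (ν : ι × ℕ) : (shiftMap M θ Δ ν).1 = ν.1 := by
  by_cases hν : ν ∈ past M θ ∪ {θ}
  · rw [shiftMap_of_mem hν]
  · rw [shiftMap_of_notMem hν]

theorem shiftMap_snd_le (ν : ι × ℕ) : (shiftMap M θ Δ ν).2 ≤ ν.2 + Δ := by
  by_cases hν : ν ∈ past M θ ∪ {θ}
  · rw [shiftMap_of_mem hν]
    exact Nat.le_add_right _ _
  · rw [shiftMap_of_notMem hν]

theorem shiftMap_snd_lt_snd (hab : hb M a b) (htime : a.2 < b.2) :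
    (shiftMap M θ Δ a).2 < (shiftMap M θ Δ b).2 := by
  by_cases hmem : b ∈ past M θ ∪ {θ}
  · rwa [shiftMap_of_mem hmem, shiftMap_of_mem (.inl (mem_past_of_hb hab hmem))]
  · rw [shiftMap_of_notMem hmem]
    exact (shiftMap_snd_le a).trans_lt (Nat.add_lt_add_right htime Δ)

theorem isRetiming_shiftMap : IsRetiming (shiftMap M θ Δ) where
  fst_apply := shiftMap_fst
  strictMono _ _ _ htime := shiftMap_snd_lt_snd (hb_of_snd_lt rfl htime) htime

theorem hb_shiftPattern_iff :
    hb (shiftPattern M θ Δ) (shiftMap M θ Δ a) (shiftMap M θ Δ b) ↔ hb M a b :=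
  isRetiming_shiftMap.hb_image_iff

theorem validPattern_shiftPattern (hM : ValidPattern M) : ValidPattern (shiftPattern M θ Δ) := by
  rintro _ ⟨m, hm, rfl⟩
  exact shiftMap_snd_lt_snd (hb_of_mem hm) (hM m hm)

end

/-- Delaying all non-past events beyond an arbitrary bound `T`: for `Δ > T`, the
shifted pattern is valid, happens-before is preserved and reflected by `φ`, the nodes
of `past(θ) ∪ {θ}` are fixed, and every other node is moved past time `T`. -/
theorem delay_beyond_bound {ι : Type*} (M : Set ((ι × ℕ) × (ι × ℕ)))
    (hM : ValidPattern M) (θ : ι × ℕ) (T Δ : ℕ) (hΔ : T < Δ) :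
    ValidPattern (shiftPattern M θ Δ) ∧
    (∀ θ₁ θ₂ : ι × ℕ,
      hb M θ₁ θ₂ ↔ hb (shiftPattern M θ Δ) (shiftMap M θ Δ θ₁) (shiftMap M θ Δ θ₂)) ∧
    (∀ ν ∈ past M θ ∪ {θ}, shiftMap M θ Δ ν = ν) ∧
    (∀ ν : ι × ℕ, ν ∉ past M θ ∪ {θ} → T < (shiftMap M θ Δ ν).2) := by
  refine ⟨validPattern_shiftPattern hM, fun _ _ => hb_shiftPattern_iff.symm,
    fun _ => shiftMap_of_mem, fun ν hν => ?_⟩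
  rw [shiftMap_of_notMem hν]
  exact hΔ.trans_le (Nat.le_add_left Δ ν.2)
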